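/- Let n ≥ 2, let f : ℂⁿ → ℂ be holomorphic, and let p ∈ ℂⁿ with f(p) ≠ 0 and (∂f/∂z₁)(p) ≠ 0. Then there exist an open neighborhood V of p, a holomorphic map X : V → ℂⁿ with X(p) ≠ 0 and df(p)(X(p)) ≠ 0, ε > 0, and a holomorphic map Z : B(0,ε) → V with Z(0) = p, Z′(T) = X(Z(T)) and f(Z(T)) ≠ 0 for all T ∈ B(0,ε), such that the function h(T) = (1 + |f(Z(T))|²·u(|f(Z(T))|²)²)·|df(Z(T))(X(Z(T)))|² + ‖X(Z(T))‖² satisfies h(0)·(∂∂̄h)(0) − (∂h)(0)·(∂̄h)(0) ≥ 0, i.e., the Gaussian curvature of h(T)|dT|² at T = 0 is ≤ 0. -/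

import Mathlib

open Complex Filter Topology Metric
open scoped ComplexOrder

/-- The function `u(t) = (t-1)/(t log t)` for `t ≠ 1`, extended by `u(1) = 1`. -/
noncomputable def u (t : ℝ) : ℝ := if t = 1 then 1 else (t - 1) / (t * Real.log t)

/-- Wirtinger derivative `∂g` of a complex-valued function on `ℂ` (real-differentiable sense). -/
noncomputable def wdz (g : ℂ → ℂ) (z : ℂ) : ℂ :=
  (fderiv ℝ g z 1 - Complex.I * fderiv ℝ g z Complex.I) / 2

/-- Wirtinger derivative `∂̄g` of a complex-valued function on `ℂ`. -/
noncomputable def wdzbar (g : ℂ → ℂ) (z : ℂ) : ℂ :=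
  (fderiv ℝ g z 1 + Complex.I * fderiv ℝ g z Complex.I) / 2

/-- `∂h` for a real-valued `h`. -/
noncomputable def wdzR (h : ℂ → ℝ) : ℂ → ℂ := wdz fun w => (h w : ℂ)

/-- `∂̄h` for a real-valued `h`. -/
noncomputable def wdzbarR (h : ℂ → ℝ) : ℂ → ℂ := wdzbar fun w => (h w : ℂ)

/-- `∂∂̄h` for a real-valued `h`. -/
noncomputable def wlapR (h : ℂ → ℝ) : ℂ → ℂ := wdz (wdzbarR h)

/-- The numerator `h·∂∂̄h − ∂h·∂̄h` of (−1/2 times) the Gaussian curvature of `h|dz|²`. -/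
noncomputable def curvNum (h : ℂ → ℝ) (z : ℂ) : ℂ :=
  (h z : ℂ) * wlapR h z - wdzR h z * wdzbarR h z

/-- The Gaussian curvature `K = −2(h·∂∂̄h − ∂h·∂̄h)/h³` of the conformal metric `h|dz|²`. -/
noncomputable def gaussCurv (h : ℂ → ℝ) (z : ℂ) : ℂ :=
  -2 * curvNum h z / (h z : ℂ) ^ 3

/-!
Along a leaf `Z` put `F = f ∘ Z` and `t = |F|²`, so that `h = (1 + t u(t)²) |F'|² + ‖Z'‖²`. Since
`√t u(t) = ∫ x in -1/2..1/2, t ^ x` is a moment generating function evaluated at `log t`, and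
moment generating functions are log-convex, `√t u(t)` is a log-convex function of the harmonic
function `log |F|²`, hence log-subharmonic. Squared norms of holomorphic maps are log-subharmonic
as well, and sums and products of log-subharmonic functions are log-subharmonic. So `h` is
log-subharmonic, which is the asserted sign of the curvature. This holds on every leaf of every
holomorphic field, in particular on the straight lines in a fixed direction.
-/

open scoped ComplexConjugate

section Wirtinger

variable {g k : ℂ → ℂ} {z : ℂ}

lemma wdz_congr (h : g =ᶠ[𝓝 z] k) : wdz g z = wdz k z := by
  simp only [wdz, h.fderiv_eq]

lemma wdz_add (hg : DifferentiableAt ℝ g z) (hk : DifferentiableAt ℝ k z) :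
    wdz (fun w => g w + k w) z = wdz g z + wdz k z := by
  simp only [wdz, fderiv_fun_add hg hk, add_apply]
  ring

lemma wdz_mul (hg : DifferentiableAt ℝ g z) (hk : DifferentiableAt ℝ k z) :
    wdz (fun w => g w * k w) z = g z * wdz k z + k z * wdz g z := by
  simp only [wdz, fderiv_fun_mul hg hk, add_apply, smul_apply, smul_eq_mul]
  ring

lemma wdz_conj : wdz (fun w => conj (g w)) z = conj (wdzbar g z) := by
  have hconj : fderiv ℝ (fun w => conj (g w)) z = (conjCLE : ℂ →L[ℝ] ℂ).comp (fderiv ℝ g z) :=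
    conjCLE.comp_fderiv
  simp [wdz, wdzbar, hconj, sub_eq_add_neg, conj_ofNat]

lemma wdzbar_eq_zero (hg : DifferentiableAt ℂ g z) : wdzbar g z = 0 := by
  simp only [wdzbar, hg.fderiv_restrictScalars ℝ, ContinuousLinearMap.coe_restrictScalars',
    fderiv_eq_smul_deriv, smul_eq_mul]
  linear_combination (deriv g z / 2) * I_mul_I

end Wirtinger

lemma eventually_differentiableAt {E F : Type*} [NormedAddCommGroup E] [NormedSpace ℝ E]
    [NormedAddCommGroup F] [NormedSpace ℝ F] {f : E → F} {x : E} {n : WithTop ℕ∞}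
    (hf : ContDiffAt ℝ n f x) (hn : 1 ≤ n) : ∀ᶠ y in 𝓝 x, DifferentiableAt ℝ f y :=
  ((hf.of_le hn).eventually (by simp)).mono fun _ hy => hy.differentiableAt one_ne_zero

section RealWirtinger

variable {h k s : ℂ → ℝ} {φ : ℝ → ℝ} {z : ℂ}

lemma wdzbarR_eq_conj_wdzR (h : ℂ → ℝ) (z : ℂ) : wdzbarR h z = conj (wdzR h z) := by
  have hconj := congrArg conj (wdz_conj (g := fun w => (h w : ℂ)) (z := z))
  simp only [conj_ofReal, conj_conj] at hconj
  exact hconj.symm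

lemma wdzR_congr (hhk : h =ᶠ[𝓝 z] k) : wdzR h z = wdzR k z :=
  wdz_congr (hhk.mono fun _ => congrArg ofReal)

lemma wlapR_congr (hhk : h =ᶠ[𝓝 z] k) : wlapR h z = wlapR k z :=
  wdz_congr <| hhk.eventuallyEq_nhds.mono fun w hw => by
    simp only [wdzbarR_eq_conj_wdzR, wdzR_congr hw]

lemma differentiableAt_ofReal_comp (hh : DifferentiableAt ℝ h z) :
    DifferentiableAt ℝ (fun w => (h w : ℂ)) z :=
  ofRealCLM.differentiableAt.comp z hh

lemma differentiableAt_wdzbarR (hh : ContDiffAt ℝ 2 h z) :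
    DifferentiableAt ℝ (wdzbarR h) z := by
  have hC : ContDiffAt ℝ 2 (fun w => (h w : ℂ)) z := ofRealCLM.contDiff.contDiffAt.comp z hh
  have hfd : DifferentiableAt ℝ (fderiv ℝ fun w => (h w : ℂ)) z :=
    (hC.fderiv_right (m := 1) (by norm_num)).differentiableAt one_ne_zero
  unfold wdzbarR wdzbar
  fun_prop

lemma wdzR_add (hh : DifferentiableAt ℝ h z) (hk : DifferentiableAt ℝ k z) :
    wdzR (fun w => h w + k w) z = wdzR h z + wdzR k z := by
  simp only [wdzR, ofReal_add,
    wdz_add (differentiableAt_ofReal_comp hh) (differentiableAt_ofReal_comp hk)]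

lemma wdzR_mul (hh : DifferentiableAt ℝ h z) (hk : DifferentiableAt ℝ k z) :
    wdzR (fun w => h w * k w) z = h z * wdzR k z + k z * wdzR h z := by
  simp only [wdzR, ofReal_mul,
    wdz_mul (differentiableAt_ofReal_comp hh) (differentiableAt_ofReal_comp hk)]

lemma wdzR_comp (hφ : DifferentiableAt ℝ φ (s z)) (hs : DifferentiableAt ℝ s z) :
    wdzR (fun w => φ (s w)) z = deriv φ (s z) * wdzR s z := by
  have hfderiv {r : ℂ → ℝ} (hr : DifferentiableAt ℝ r z) (v : ℂ) :
      fderiv ℝ (fun w => (r w : ℂ)) z v = fderiv ℝ r z v :=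
    DFunLike.congr_fun (ofRealCLM.hasFDerivAt.comp z hr.hasFDerivAt).fderiv v
  have hchain : fderiv ℝ (fun w => φ (s w)) z = deriv φ (s z) • fderiv ℝ s z :=
    (hφ.hasDerivAt.comp_hasFDerivAt z hs.hasFDerivAt).fderiv
  have hφs : DifferentiableAt ℝ (fun w => φ (s w)) z := hφ.comp z hs
  simp only [wdzR, wdz, hfderiv hφs, hfderiv hs, hchain, smul_apply, smul_eq_mul, ofReal_mul]
  ring

lemma wlapR_add (hh : ContDiffAt ℝ 2 h z) (hk : ContDiffAt ℝ 2 k z) :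
    wlapR (fun w => h w + k w) z = wlapR h z + wlapR k z := by
  have hdbar : wdzbarR (fun w => h w + k w) =ᶠ[𝓝 z] fun w => wdzbarR h w + wdzbarR k w := by
    filter_upwards [eventually_differentiableAt hh one_le_two,
      eventually_differentiableAt hk one_le_two] with w hhw hkw
    simp only [wdzbarR_eq_conj_wdzR, wdzR_add hhw hkw, map_add]
  rw [wlapR, wdz_congr hdbar, wdz_add (differentiableAt_wdzbarR hh) (differentiableAt_wdzbarR hk)]
  rfl

lemma wlapR_mul (hh : ContDiffAt ℝ 2 h z) (hk : ContDiffAt ℝ 2 k z) :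
    wlapR (fun w => h w * k w) z =
      h z * wlapR k z + k z * wlapR h z + (2 * (wdzR h z * conj (wdzR k z)).re : ℝ) := by
  have hdbar : wdzbarR (fun w => h w * k w) =ᶠ[𝓝 z]
      fun w => h w * wdzbarR k w + k w * wdzbarR h w := by
    filter_upwards [eventually_differentiableAt hh one_le_two,
      eventually_differentiableAt hk one_le_two] with w hhw hkw
    simp only [wdzbarR_eq_conj_wdzR, wdzR_mul hhw hkw, map_add, map_mul, conj_ofReal]
  have hh' := differentiableAt_ofReal_comp (hh.differentiableAt two_ne_zero)
  have hk' := differentiableAt_ofReal_comp (hk.differentiableAt two_ne_zero)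
  have hh'' := differentiableAt_wdzbarR hh
  have hk'' := differentiableAt_wdzbarR hk
  rw [wlapR, wdz_congr hdbar, wdz_add (hh'.fun_mul hk'') (hk'.fun_mul hh''), wdz_mul hh' hk'',
    wdz_mul hk' hh'', ← add_conj]
  simp only [wdzbarR_eq_conj_wdzR, map_mul, conj_conj, wlapR, wdzR]
  ring

lemma wlapR_comp (hφ : ContDiffAt ℝ 2 φ (s z)) (hs : ContDiffAt ℝ 2 s z) :
    wlapR (fun w => φ (s w)) z =
      deriv (deriv φ) (s z) * normSq (wdzR s z) + deriv φ (s z) * wlapR s z := by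
  have hsd := hs.differentiableAt two_ne_zero
  have hdbar : wdzbarR (fun w => φ (s w)) =ᶠ[𝓝 z]
      fun w => ((deriv φ (s w) : ℝ) : ℂ) * wdzbarR s w := by
    filter_upwards [eventually_differentiableAt hs one_le_two,
      hs.continuousAt.eventually (eventually_differentiableAt hφ one_le_two)] with w hsw hφw
    simp only [wdzbarR_eq_conj_wdzR, wdzR_comp hφw hsw, map_mul, conj_ofReal]
  have hφ' : DifferentiableAt ℝ (deriv φ) (s z) :=
    (hφ.derivWithin (m := 1) (by norm_num)).differentiableAt one_ne_zero
  have hφs' : DifferentiableAt ℝ (fun w => deriv φ (s w)) z := hφ'.comp z hsd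
  have hcomp : wdz (fun w => ((deriv φ (s w) : ℝ) : ℂ)) z = deriv (deriv φ) (s z) * wdzR s z :=
    wdzR_comp hφ' hsd
  rw [wlapR, wdz_congr hdbar, wdz_mul (differentiableAt_ofReal_comp hφs')
    (differentiableAt_wdzbarR hs), hcomp, wdzbarR_eq_conj_wdzR, wlapR, ← mul_conj]
  ring

end RealWirtinger

section NormSq

open scoped InnerProductSpace

variable {E : Type*} [NormedAddCommGroup E] [InnerProductSpace ℂ E] {Φ Ψ : ℂ → E} {z : ℂ}

lemma wdz_inner (hΨ : DifferentiableAt ℂ Ψ z) (hΦ : DifferentiableAt ℂ Φ z) :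
    wdz (fun w => ⟪Ψ w, Φ w⟫_ℂ) z = ⟪Ψ z, deriv Φ z⟫_ℂ := by
  simp only [wdz, fderiv_inner_apply ℂ (hΨ.restrictScalars ℝ) (hΦ.restrictScalars ℝ),
    hΨ.fderiv_restrictScalars ℝ, hΦ.fderiv_restrictScalars ℝ,
    ContinuousLinearMap.coe_restrictScalars', fderiv_eq_smul_deriv, one_smul, inner_smul_left,
    inner_smul_right, conj_I]
  linear_combination ((⟪deriv Ψ z, Φ z⟫_ℂ - ⟪Ψ z, deriv Φ z⟫_ℂ) / 2) * I_mul_I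

lemma wdzR_norm_sq (hΦ : DifferentiableAt ℂ Φ z) :
    wdzR (fun w => ‖Φ w‖ ^ 2) z = ⟪Φ z, deriv Φ z⟫_ℂ := by
  simpa only [inner_self_eq_norm_sq_to_K, wdzR, ofReal_pow] using! wdz_inner hΦ hΦ

lemma contDiffAt_norm_sq [CompleteSpace E] (hΦ : AnalyticAt ℂ Φ z) :
    ContDiffAt ℝ 2 (fun w => ‖Φ w‖ ^ 2) z :=
  (hΦ.contDiffAt.restrict_scalars ℝ).norm_sq ℂ

lemma wlapR_norm_sq [CompleteSpace E] (hΦ : AnalyticAt ℂ Φ z) :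
    wlapR (fun w => ‖Φ w‖ ^ 2) z = (‖deriv Φ z‖ ^ 2 : ℝ) := by
  have hdbar : wdzbarR (fun w => ‖Φ w‖ ^ 2) =ᶠ[𝓝 z] fun w => ⟪deriv Φ w, Φ w⟫_ℂ := by
    filter_upwards [hΦ.eventually_analyticAt] with w hw
    rw [wdzbarR_eq_conj_wdzR, wdzR_norm_sq hw.differentiableAt, inner_conj_symm]
  rw [wlapR, wdz_congr hdbar, wdz_inner hΦ.deriv.differentiableAt hΦ.differentiableAt,
    inner_self_eq_norm_sq_to_K, ofReal_pow]
  rfl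

end NormSq

section LogNormSq

variable {F : ℂ → ℂ} {z : ℂ}

lemma contDiffAt_log_norm_sq (hF : AnalyticAt ℂ F z) (hz : F z ≠ 0) :
    ContDiffAt ℝ 2 (fun w => Real.log (‖F w‖ ^ 2)) z :=
  (contDiffAt_norm_sq hF).log (by positivity)

lemma wdzR_log_norm_sq (hF : DifferentiableAt ℂ F z) (hz : F z ≠ 0) :
    wdzR (fun w => Real.log (‖F w‖ ^ 2)) z = deriv F z / F z := by
  have hnorm : ‖F z‖ ^ 2 ≠ 0 := by positivity
  have hconj : conj (F z) ≠ 0 := (map_ne_zero _).2 hz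
  rw [wdzR_comp (Real.differentiableAt_log hnorm) ((hF.restrictScalars ℝ).norm_sq ℂ),
    wdzR_norm_sq hF, Real.deriv_log, ofReal_inv, ofReal_pow, ← mul_conj', RCLike.inner_apply]
  field_simp

lemma wlapR_log_norm_sq (hF : AnalyticAt ℂ F z) (hz : F z ≠ 0) :
    wlapR (fun w => Real.log (‖F w‖ ^ 2)) z = 0 := by
  have hdbar : wdzbarR (fun w => Real.log (‖F w‖ ^ 2)) =ᶠ[𝓝 z]
      fun w => conj (deriv F w / F w) := by
    filter_upwards [hF.eventually_analyticAt, hF.continuousAt.eventually_ne hz] with w hw hw0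
    rw [wdzbarR_eq_conj_wdzR, wdzR_log_norm_sq hw.differentiableAt hw0]
  have hlogDeriv := (hF.deriv.fun_div hF hz).differentiableAt
  rw [wlapR, wdz_congr hdbar, wdz_conj, wdzbar_eq_zero hlogDeriv, map_zero]

end LogNormSq

/-- A `C²` function `h` is *infinitesimally log-subharmonic* at `z` if `h(z) ≥ 0` and the
Hermitian matrix with rows `(h, ∂h)` and `(∂̄h, ∂∂̄h)` is positive semidefinite at `z`. Where
`h > 0` this says `∂∂̄ log h ≥ 0`; the matrix form also makes sense at the zeros of `h`, such as
those of `|k|²` for `k` holomorphic. -/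
structure IsLogSubharmonicAt (h : ℂ → ℝ) (z : ℂ) : Prop where
  contDiffAt : ContDiffAt ℝ 2 h z
  nonneg : 0 ≤ h z
  wlapR_nonneg : 0 ≤ wlapR h z
  normSq_wdzR_le : normSq (wdzR h z) ≤ h z * (wlapR h z).re

lemma abs_two_mul_re_mul_conj_le {a b : ℂ} {x X y Y : ℝ} (hx : 0 ≤ x) (hX : 0 ≤ X) (hy : 0 ≤ y)
    (hY : 0 ≤ Y) (ha : normSq a ≤ x * X) (hb : normSq b ≤ y * Y) :
    |2 * (a * conj b).re| ≤ x * Y + y * X := by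
  refine abs_le_of_sq_le_sq ?_ (by positivity)
  have hre : (a * conj b).re ^ 2 ≤ normSq a * normSq b := by
    have := re_sq_le_normSq (a * conj b)
    rwa [normSq_mul, normSq_conj, ← sq] at this
  calc (2 * (a * conj b).re) ^ 2 = 4 * (a * conj b).re ^ 2 := by ring
    _ ≤ 4 * ((x * X) * (y * Y)) := by
      gcongr
      exact hre.trans (mul_le_mul ha hb (normSq_nonneg b) (by positivity))
    _ ≤ (x * Y + y * X) ^ 2 := by linarith [sq_nonneg (x * Y - y * X)]

namespace IsLogSubharmonicAt

variable {h k : ℂ → ℝ} {z : ℂ}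

lemma wlapR_re_nonneg (hh : IsLogSubharmonicAt h z) : 0 ≤ (wlapR h z).re :=
  (nonneg_iff.1 hh.wlapR_nonneg).1

lemma ofReal_re_wlapR (hh : IsLogSubharmonicAt h z) : ((wlapR h z).re : ℂ) = wlapR h z :=
  (eq_re_of_ofReal_le hh.wlapR_nonneg).symm

lemma curvNum_nonneg (hh : IsLogSubharmonicAt h z) : 0 ≤ curvNum h z := by
  rw [curvNum, wdzbarR_eq_conj_wdzR, mul_conj, ← hh.ofReal_re_wlapR, ← ofReal_mul, ← ofReal_sub,
    zero_le_real]
  exact sub_nonneg.2 hh.normSq_wdzR_le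

lemma congr (hh : IsLogSubharmonicAt h z) (hkh : k =ᶠ[𝓝 z] h) : IsLogSubharmonicAt k z where
  contDiffAt := hh.contDiffAt.congr_of_eventuallyEq hkh
  nonneg := hkh.eq_of_nhds ▸ hh.nonneg
  wlapR_nonneg := wlapR_congr hkh ▸ hh.wlapR_nonneg
  normSq_wdzR_le := by
    simpa only [wlapR_congr hkh, wdzR_congr hkh, hkh.eq_of_nhds] using hh.normSq_wdzR_le

lemma abs_two_mul_re_wdzR_mul_conj_le (hh : IsLogSubharmonicAt h z)
    (hk : IsLogSubharmonicAt k z) :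
    |2 * (wdzR h z * conj (wdzR k z)).re| ≤ h z * (wlapR k z).re + k z * (wlapR h z).re :=
  abs_two_mul_re_mul_conj_le hh.nonneg hh.wlapR_re_nonneg hk.nonneg hk.wlapR_re_nonneg
    hh.normSq_wdzR_le hk.normSq_wdzR_le

lemma add (hh : IsLogSubharmonicAt h z) (hk : IsLogSubharmonicAt k z) :
    IsLogSubharmonicAt (fun w => h w + k w) z where
  contDiffAt := hh.contDiffAt.add hk.contDiffAt
  nonneg := add_nonneg hh.nonneg hk.nonneg
  wlapR_nonneg := by
    rw [wlapR_add hh.contDiffAt hk.contDiffAt]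
    exact add_nonneg hh.wlapR_nonneg hk.wlapR_nonneg
  normSq_wdzR_le := by
    rw [wlapR_add hh.contDiffAt hk.contDiffAt,
      wdzR_add (hh.contDiffAt.differentiableAt two_ne_zero)
        (hk.contDiffAt.differentiableAt two_ne_zero), normSq_add, add_re]
    linarith [hh.normSq_wdzR_le, hk.normSq_wdzR_le,
      (abs_le.1 (hh.abs_two_mul_re_wdzR_mul_conj_le hk)).2]

lemma mul (hh : IsLogSubharmonicAt h z) (hk : IsLogSubharmonicAt k z) :
    IsLogSubharmonicAt (fun w => h w * k w) z := by
  have hlap : wlapR (fun w => h w * k w) z = ((h z * (wlapR k z).re + k z * (wlapR h z).re +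
      2 * (wdzR h z * conj (wdzR k z)).re : ℝ) : ℂ) := by
    rw [wlapR_mul hh.contDiffAt hk.contDiffAt, ofReal_add, ofReal_add, ofReal_mul (h z),
      ofReal_mul (k z), hh.ofReal_re_wlapR, hk.ofReal_re_wlapR]
  refine ⟨hh.contDiffAt.mul hk.contDiffAt, mul_nonneg hh.nonneg hk.nonneg, ?_, ?_⟩
  · rw [hlap, zero_le_real]
    linarith [(abs_le.1 (hh.abs_two_mul_re_wdzR_mul_conj_le hk)).1]
  · rw [hlap, ofReal_re, wdzR_mul (hh.contDiffAt.differentiableAt two_ne_zero)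
      (hk.contDiffAt.differentiableAt two_ne_zero)]
    calc normSq (h z * wdzR k z + k z * wdzR h z)
        = h z ^ 2 * normSq (wdzR k z) + k z ^ 2 * normSq (wdzR h z) +
            h z * k z * (2 * (wdzR h z * conj (wdzR k z)).re) := by
          simp only [normSq_apply, add_re, add_im, mul_re, mul_im, ofReal_re, ofReal_im, conj_re,
            conj_im]
          ring
      _ ≤ h z ^ 2 * (k z * (wlapR k z).re) + k z ^ 2 * (h z * (wlapR h z).re) +
            h z * k z * (2 * (wdzR h z * conj (wdzR k z)).re) := by
          gcongr
          exacts [hk.normSq_wdzR_le, hh.normSq_wdzR_le]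
      _ = h z * k z * (h z * (wlapR k z).re + k z * (wlapR h z).re +
            2 * (wdzR h z * conj (wdzR k z)).re) := by ring

lemma norm_sq {E : Type*} [NormedAddCommGroup E] [InnerProductSpace ℂ E] [CompleteSpace E]
    {Φ : ℂ → E} (hΦ : AnalyticAt ℂ Φ z) : IsLogSubharmonicAt (fun w => ‖Φ w‖ ^ 2) z where
  contDiffAt := contDiffAt_norm_sq hΦ
  nonneg := sq_nonneg _
  wlapR_nonneg := by
    rw [wlapR_norm_sq hΦ, zero_le_real]
    exact sq_nonneg _
  normSq_wdzR_le := by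
    rw [wlapR_norm_sq hΦ, ofReal_re, wdzR_norm_sq hΦ.differentiableAt, normSq_eq_norm_sq, ← mul_pow]
    gcongr
    exact norm_inner_le_norm _ _

lemma one (z : ℂ) : IsLogSubharmonicAt (fun _ => 1) z := by
  simpa using norm_sq (analyticAt_const (v := (1 : ℂ)) (x := z))

lemma comp_of_wlapR_eq_zero {s : ℂ → ℝ} {φ : ℝ → ℝ} (hs : ContDiffAt ℝ 2 s z)
    (hs0 : wlapR s z = 0) (hφ : ContDiffAt ℝ 2 φ (s z)) (hφ_nonneg : 0 ≤ φ (s z))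
    (hφ''_nonneg : 0 ≤ deriv (deriv φ) (s z))
    (hφ'_sq_le : deriv φ (s z) ^ 2 ≤ φ (s z) * deriv (deriv φ) (s z)) :
    IsLogSubharmonicAt (fun w => φ (s w)) z := by
  have hlap := wlapR_comp hφ hs
  rw [hs0, mul_zero, add_zero, ← ofReal_mul] at hlap
  refine ⟨hφ.comp z hs, hφ_nonneg, ?_, ?_⟩
  · rw [hlap, zero_le_real]
    exact mul_nonneg hφ''_nonneg (normSq_nonneg _)
  · rw [hlap, ofReal_re, wdzR_comp (hφ.differentiableAt two_ne_zero)
      (hs.differentiableAt two_ne_zero), normSq_mul, normSq_ofReal, ← sq, ← mul_assoc]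
    exact mul_le_mul_of_nonneg_right hφ'_sq_le (normSq_nonneg _)

end IsLogSubharmonicAt

section MomentGeneratingFunction

open MeasureTheory ProbabilityTheory

variable {Ω : Type*} {m : MeasurableSpace Ω} {μ : Measure Ω} {X : Ω → ℝ} {t : ℝ}

lemma deriv_deriv_mgf (ht : t ∈ interior (integrableExpSet X μ)) :
    deriv (deriv (mgf X μ)) t = μ[fun ω => X ω ^ 2 * Real.exp (t * X ω)] := by
  rw [← iteratedDeriv_mgf ht 2, iteratedDeriv_succ, iteratedDeriv_one]

lemma deriv_deriv_mgf_nonneg (ht : t ∈ interior (integrableExpSet X μ)) :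
    0 ≤ deriv (deriv (mgf X μ)) t := by
  rw [deriv_deriv_mgf ht]
  exact integral_nonneg fun ω => by positivity

lemma deriv_mgf_sq_le (ht : t ∈ interior (integrableExpSet X μ)) :
    deriv (mgf X μ) t ^ 2 ≤ mgf X μ t * deriv (deriv (mgf X μ)) t := by
  rcases eq_or_ne μ 0 with rfl | hμ
  · simp
  have hmgf : 0 < mgf X μ t := mgf_pos' hμ (interior_subset (s := integrableExpSet X μ) ht)
  have hvar : 0 ≤ iteratedDeriv 2 (cgf X μ) t := by
    rw [iteratedDeriv_two_cgf_eq_integral ht]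
    exact div_nonneg (integral_nonneg fun ω => by positivity) hmgf.le
  rw [iteratedDeriv_two_cgf ht, deriv_cgf ht, ← deriv_deriv_mgf ht, ← deriv_mgf ht, sub_nonneg,
    div_pow, div_le_div_iff₀ (by positivity) hmgf] at hvar
  exact le_of_mul_le_mul_right (hvar.trans_eq (by ring)) hmgf

lemma IsLogSubharmonicAt.mgf_comp {s : ℂ → ℝ} {z : ℂ} (hs : ContDiffAt ℝ 2 s z)
    (hs0 : wlapR s z = 0) (ht : s z ∈ interior (integrableExpSet X μ)) :
    IsLogSubharmonicAt (fun w => mgf X μ (s w)) z :=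
  .comp_of_wlapR_eq_zero hs hs0 (analyticAt_mgf ht).contDiffAt mgf_nonneg
    (deriv_deriv_mgf_nonneg ht) (deriv_mgf_sq_le ht)

/-- The uniform distribution on `(-1/2, 1/2]`; its moment generating function
`sinh(s/2) / (s/2)` is `√t · u(t)` in the variable `s = log t`. -/
noncomputable def centeredUniform : Measure ℝ := volume.restrict (Set.Ioc (-(1 / 2)) (1 / 2))

lemma integrableExpSet_centeredUniform : integrableExpSet id centeredUniform = Set.univ := by
  refine Set.eq_univ_of_forall fun s => ?_
  have hcont : Continuous fun x : ℝ => Real.exp (s * id x) := by fun_prop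
  exact hcont.integrableOn_Ioc

lemma mgf_centeredUniform_zero : mgf id centeredUniform 0 = 1 := by
  rw [mgf_zero']
  norm_num [centeredUniform]

lemma mgf_centeredUniform {s : ℝ} (hs : s ≠ 0) :
    mgf id centeredUniform s = (Real.exp (s / 2) - Real.exp (-(s / 2))) / s := by
  simp only [mgf, id, centeredUniform]
  rw [← intervalIntegral.integral_of_le (by norm_num),
    intervalIntegral.integral_comp_mul_left Real.exp hs, integral_exp, smul_eq_mul, inv_mul_eq_div]
  congr 3 <;> ring

lemma mul_u_sq_eq_mgf_sq {t : ℝ} (ht : 0 < t) :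
    t * u t ^ 2 = mgf id centeredUniform (Real.log t) ^ 2 := by
  rcases eq_or_ne t 1 with rfl | h1
  · rw [Real.log_one, mgf_centeredUniform_zero, u, if_pos rfl]
    norm_num
  have hlog : Real.log t ≠ 0 := Real.log_ne_zero_of_pos_of_ne_one ht h1
  have hsqrt : Real.exp (Real.log t / 2) = √t := by
    rw [Real.exp_half, Real.exp_log ht]
  have : 0 < √t := Real.sqrt_pos.2 ht
  rw [mgf_centeredUniform hlog, Real.exp_neg, hsqrt, u, if_neg h1]
  field_simp
  rw [Real.sq_sqrt ht.le]
  ring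

end MomentGeneratingFunction

section Leaf

lemma IsLogSubharmonicAt.norm_sq_mul_u_norm_sq_sq {F : ℂ → ℂ} {z : ℂ} (hF : AnalyticAt ℂ F z)
    (hz : F z ≠ 0) : IsLogSubharmonicAt (fun w => ‖F w‖ ^ 2 * u (‖F w‖ ^ 2) ^ 2) z := by
  have hmgf := mgf_comp (X := id) (μ := centeredUniform) (contDiffAt_log_norm_sq hF hz)
    (wlapR_log_norm_sq hF hz) (by simp [integrableExpSet_centeredUniform])
  refine (hmgf.mul hmgf).congr ?_
  filter_upwards [hF.continuousAt.eventually_ne hz] with w hw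
  rw [mul_u_sq_eq_mgf_sq (by positivity), sq]

variable {E : Type*} [NormedAddCommGroup E] [InnerProductSpace ℂ E] [CompleteSpace E]
  {f : E → ℂ} {U : Set E}

lemma curvNum_leaf_nonneg {X : E → E} {Z : ℂ → E} {D : Set ℂ} {T : ℂ} (hU : IsOpen U)
    (hf : DifferentiableOn ℂ f U) (hD : IsOpen D) (hZ : DifferentiableOn ℂ Z D)
    (hZU : Set.MapsTo Z D U) (hZX : ∀ S ∈ D, deriv Z S = X (Z S)) (hT : T ∈ D)
    (hfZ : f (Z T) ≠ 0) :
    0 ≤ curvNum (fun S =>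
      (1 + ‖f (Z S)‖ ^ 2 * u (‖f (Z S)‖ ^ 2) ^ 2) *
        ‖fderiv ℂ f (Z S) (X (Z S))‖ ^ 2 + ‖X (Z S)‖ ^ 2) T := by
  have hDT : D ∈ 𝓝 T := hD.mem_nhds hT
  have hZan : AnalyticAt ℂ Z T := hZ.analyticAt hDT
  have hfZan : AnalyticAt ℂ (fun S => f (Z S)) T := (hf.comp hZ hZU).analyticAt hDT
  have hderiv : ∀ S ∈ D, deriv (fun S => f (Z S)) S = fderiv ℂ f (Z S) (X (Z S)) := by
    intro S hS
    rw [← hZX S hS]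
    exact ((hf.differentiableAt (hU.mem_nhds (hZU hS))).hasFDerivAt.comp_hasDerivAt S
      (hZ.differentiableAt (hD.mem_nhds hS)).hasDerivAt).deriv
  have hlog := (((IsLogSubharmonicAt.one T).add (.norm_sq_mul_u_norm_sq_sq hfZan hfZ)).mul
    (.norm_sq hfZan.deriv)).add (.norm_sq hZan.deriv)
  refine (hlog.congr ?_).curvNum_nonneg
  filter_upwards [hDT] with S hS
  rw [hderiv S hS, hZX S hS]

theorem stmt4_general (hU : IsOpen U) (hf : DifferentiableOn ℂ f U) {p : E} (hp : p ∈ U)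
    (hfp : f p ≠ 0) (v : E) :
    ∃ X : E → E, DifferentiableOn ℂ X U ∧ X p = v ∧
    ∃ ε : ℝ, 0 < ε ∧
    ∃ Z : ℂ → E,
      DifferentiableOn ℂ Z (ball 0 ε) ∧
      Z 0 = p ∧
      (∀ T ∈ ball (0 : ℂ) ε, Z T ∈ U) ∧
      (∀ T ∈ ball (0 : ℂ) ε, deriv Z T = X (Z T)) ∧
      (∀ T ∈ ball (0 : ℂ) ε, f (Z T) ≠ 0) ∧
      ∀ T ∈ ball (0 : ℂ) ε, 0 ≤ curvNum (fun S =>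
        (1 + ‖f (Z S)‖ ^ 2 * u (‖f (Z S)‖ ^ 2) ^ 2) *
          ‖fderiv ℂ f (Z S) (X (Z S))‖ ^ 2 + ‖X (Z S)‖ ^ 2) T := by
  obtain ⟨Z, hZ0, hZ⟩ : ∃ Z : ℂ → E, Z 0 = p ∧ ∀ T, HasDerivAt Z v T :=
    ⟨fun T => p + T • v, by simp, fun T =>
      (((hasDerivAt_id T).smul_const v).const_add p).congr_deriv (one_smul ℂ v)⟩
  have hnear : ∀ᶠ q in 𝓝 (Z 0), q ∈ U ∧ f q ≠ 0 := by
    rw [hZ0]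
    exact (hU.eventually_mem hp).and
      ((hf.differentiableAt (hU.mem_nhds hp)).continuousAt.eventually_ne hfp)
  obtain ⟨ε, hε, hball⟩ := eventually_nhds_iff_ball.1 ((hZ 0).continuousAt.eventually hnear)
  have hZball : DifferentiableOn ℂ Z (ball 0 ε) := fun T _ =>
    (hZ T).differentiableAt.differentiableWithinAt
  have hZU : Set.MapsTo Z (ball 0 ε) U := fun T hT => (hball T hT).1
  have hfZ : ∀ T ∈ ball (0 : ℂ) ε, f (Z T) ≠ 0 := fun T hT => (hball T hT).2
  have hZX : ∀ T ∈ ball (0 : ℂ) ε, deriv Z T = v := fun T _ => (hZ T).deriv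
  exact ⟨fun _ => v, differentiableOn_const v, rfl, ε, hε, Z, hZball, hZ0, hZU, hZX, hfZ,
    fun T hT => curvNum_leaf_nonneg (X := fun _ => v) hU hf isOpen_ball hZball hZU hZX hT
      (hfZ T hT)⟩

end Leaf

/-- if `f(p) ≠ 0` and `∂f/∂z₁(p) ≠ 0`, there exist a non-singular
holomorphic vector field `X` near `p` with `df(p)(X(p)) ≠ 0` and a leaf `Z` of `X`
through `p` along which the leafwise Gaussian curvature at `T = 0` is `≤ 0`. -/
theorem stmt4 (n : ℕ) (hn : 2 ≤ n)
    (f : EuclideanSpace ℂ (Fin n) → ℂ) (hf : Differentiable ℂ f)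
    (p : EuclideanSpace ℂ (Fin n)) (hfp : f p ≠ 0)
    (hdf1 : fderiv ℂ f p (EuclideanSpace.single (⟨0, by omega⟩ : Fin n) 1) ≠ 0) :
    ∃ (V : Set (EuclideanSpace ℂ (Fin n))), IsOpen V ∧ p ∈ V ∧
    ∃ (X : EuclideanSpace ℂ (Fin n) → EuclideanSpace ℂ (Fin n)),
      DifferentiableOn ℂ X V ∧ X p ≠ 0 ∧ fderiv ℂ f p (X p) ≠ 0 ∧
    ∃ (ε : ℝ), 0 < ε ∧
    ∃ (Z : ℂ → EuclideanSpace ℂ (Fin n)),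
      DifferentiableOn ℂ Z (Metric.ball 0 ε) ∧
      Z 0 = p ∧
      (∀ T ∈ Metric.ball (0 : ℂ) ε, Z T ∈ V) ∧
      (∀ T ∈ Metric.ball (0 : ℂ) ε, deriv Z T = X (Z T)) ∧
      (∀ T ∈ Metric.ball (0 : ℂ) ε, f (Z T) ≠ 0) ∧
      0 ≤ curvNum (fun T =>
        (1 + ‖f (Z T)‖ ^ 2 * u (‖f (Z T)‖ ^ 2) ^ 2) *
          ‖fderiv ℂ f (Z T) (X (Z T))‖ ^ 2 + ‖X (Z T)‖ ^ 2) 0 := by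
  obtain ⟨X, hX, hXp, ε, hε, Z, hZ, hZ0, hZU, hZX, hfZ, hcurv⟩ := stmt4_general isOpen_univ
    hf.differentiableOn (Set.mem_univ p) hfp (EuclideanSpace.single (⟨0, by omega⟩ : Fin n) 1)
  exact ⟨Set.univ, isOpen_univ, Set.mem_univ p, X, hX, by simp [hXp], hXp ▸ hdf1,
    ε, hε, Z, hZ, hZ0, hZU, hZX, hfZ, hcurv 0 (mem_ball_self hε)⟩
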